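/- arXiv:2203.08572 — 2 statements merged into one kernel-verified Lean document; each statement's English description precedes it below -/
import Mathlib

section
/- The resurgence of the edge ideal I = I(G_{n,r}) equals 2(n - (r+1))/n. -/
open MvPolynomial

/-- The graph `G_{n,r}`: vertices `x_1,…,x_n` in cyclic order (indexed by `ZMod n`),
where for `i < j` the vertices `x_i, x_j` are adjacent iff `r+1 ≤ j-i ≤ n-(r+1)`. -/
def Gnr (n r : ℕ) : SimpleGraph (ZMod n) :=
  SimpleGraph.fromRel (fun i j => r + 1 ≤ j.val - i.val ∧ j.val - i.val ≤ n - (r + 1))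

/-- A vertex cover (as a finite set of vertices): meets every edge. -/
def IsVertexCover {V : Type*} (G : SimpleGraph V) (C : Finset V) : Prop :=
  ∀ ⦃a b : V⦄, G.Adj a b → a ∈ C ∨ b ∈ C

/-- A minimal vertex cover. -/
def IsMinVertexCover {V : Type*} (G : SimpleGraph V) (C : Finset V) : Prop :=
  IsVertexCover G C ∧ ∀ D ⊆ C, IsVertexCover G D → D = C

/-- The edge ideal `I(G) = (x_i x_j : {x_i,x_j} ∈ E(G))` of a graph. -/
noncomputable def edgeIdeal (k : Type*) [Field k] {V : Type*} (G : SimpleGraph V) :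
    Ideal (MvPolynomial V k) :=
  Ideal.span {p | ∃ i j : V, G.Adj i j ∧ p = X i * X j}

/-- The monomial prime ideal generated by the variables of a vertex set `C`. -/
noncomputable def coverPrime (k : Type*) [Field k] {V : Type*} (C : Finset V) :
    Ideal (MvPolynomial V k) :=
  Ideal.span ((fun i => (X i : MvPolynomial V k)) '' ↑C)

/-- The `t`-th symbolic power of the edge ideal of `G`: the intersection of the `t`-th
powers of the monomial primes corresponding to the minimal vertex covers of `G`. -/
noncomputable def symbPow (k : Type*) [Field k] {V : Type*} (G : SimpleGraph V) (t : ℕ) :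
    Ideal (MvPolynomial V k) :=
  ⨅ (C : Finset V) (_ : IsMinVertexCover G C), (coverPrime k C) ^ t

/-!
A monomial `x^w` lies in `I^{(s)}` iff every independent set `S` satisfies `w(S) + s ≤ deg w`.

For the lower bound, take `w` constant, equal to `2b`: then `x^w ∈ I^{(s)}` with
`s = 2b(n - (r + 1))`, because `r + 1` is the independence number, but `deg w = 2bn` is too small
for `x^w` to lie in `I^{nb+1}`. The ratios `s / (nb + 1)` tend to `2(n - (r + 1))/n`.

For the upper bound, averaging the condition over the rotations of a maximum independent set gives
`n s ≤ (n - (r + 1)) deg w`, hence `2t ≤ deg w` whenever `s/t > 2(n - (r + 1))/n`; also `t ≤ s`.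
If `deg w > 2t`, some vertex of positive weight lies in every independent set of weight
`deg w - t`, and its weight can be lowered by one without violating `w(S) + t ≤ deg w`. So we may
assume that `deg w = 2t` and that independent sets have weight at most `t`. List the variables of
`x^w` with multiplicity in cyclic order as `y_0, …, y_{2t-1}`. Then `y_i` and `y_{t+i}` are
adjacent, since otherwise an independent arc would have weight at least `t + 1`; so `x^w` is a
product of `t` edges.
-/

section MonomialIdeals

variable {k : Type*} [Field k] {V : Type*}

lemma coverPrime_pow_eq_span (C : Finset V) (s : ℕ) :
    coverPrime k C ^ s =
      Ideal.span ((monomial · 1) '' {m : V →₀ ℕ | m.degree = s ∧ ↑m.support ⊆ (C : Set V)}) := by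
  rw [coverPrime, Ideal.span, Submodule.span_pow, Finsupp.image_pow_eq_finsuppProd_image]
  simp only [monomial_eq, map_one, one_mul]

lemma mem_coverPrime_pow_iff {C : Finset V} {s : ℕ} {p : MvPolynomial V k} :
    p ∈ coverPrime k C ^ s ↔ ∀ m ∈ p.support, s ≤ ∑ v ∈ C, m v := by
  classical
  constructor
  · rw [coverPrime_pow_eq_span, mem_ideal_span_monomial_image]
    intro hp m hm
    obtain ⟨d, ⟨rfl, hd⟩, hdm⟩ := hp m hm
    calc d.degree ≤ ∑ v ∈ C, d v := Finset.sum_le_sum_of_subset (Finset.coe_subset.1 hd)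
      _ ≤ ∑ v ∈ C, m v := Finset.sum_le_sum fun v _ => hdm v
  · intro hp
    have hprod (m : V →₀ ℕ) :
        (∏ v ∈ C, X v ^ m v : MvPolynomial V k) ∈ coverPrime k C ^ ∑ v ∈ C, m v := by
      rw [← Finset.prod_pow_eq_pow_sum]
      exact Ideal.prod_mem_prod fun v hv =>
        Ideal.pow_mem_pow (Ideal.subset_span (Set.mem_image_of_mem _ hv)) _
    rw [p.as_sum]
    refine Ideal.sum_mem _ fun m hm => Ideal.mem_of_dvd _ ?_
      (Ideal.pow_le_pow_right (hp m hm) (hprod m))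
    have hle : ∑ v ∈ C, Finsupp.single v (m v) ≤ m := by
      intro u
      simp only [Finsupp.finsetSum_apply, Finsupp.single_apply, Finset.sum_ite_eq']
      split_ifs <;> simp
    have hmono : ∏ v ∈ C, (X v : MvPolynomial V k) ^ m v =
        monomial (∑ v ∈ C, Finsupp.single v (m v)) 1 := by
      simp only [monomial_sum_one, X_pow_eq_monomial]
    rw [hmono]
    exact monomial_dvd_monomial.2 ⟨Or.inr hle, one_dvd _⟩

lemma edgeIdeal_pow_le_pow_idealOfVars (G : SimpleGraph V) (t : ℕ) :
    edgeIdeal k G ^ t ≤ idealOfVars V k ^ (2 * t) := by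
  rw [pow_mul]
  refine Ideal.pow_right_mono (Ideal.span_le.2 ?_) t
  rintro _ ⟨i, j, -, rfl⟩
  rw [pow_two]
  exact Ideal.mul_mem_mul (Ideal.subset_span ⟨i, rfl⟩) (Ideal.subset_span ⟨j, rfl⟩)

end MonomialIdeals

section IndependentSets

variable {V : Type*} {G : SimpleGraph V}

lemma isVertexCover_compl_iff_isIndepSet [Fintype V] [DecidableEq V] {S : Finset V} :
    IsVertexCover G Sᶜ ↔ G.IsIndepSet S := by
  constructor
  · intro h a ha b hb _ hab
    simpa [Finset.mem_coe.1 ha, Finset.mem_coe.1 hb] using h hab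
  · intro h a b hab
    by_contra! hS
    simp only [Finset.mem_compl, not_not] at hS
    exact h hS.1 hS.2 hab.ne hab

lemma IsVertexCover.exists_isMinVertexCover_subset {C : Finset V} (hC : IsVertexCover G C) :
    ∃ D ⊆ C, IsMinVertexCover G D := by
  obtain ⟨D, hDC, hD⟩ := exists_minimal_le_of_wellFoundedLT (IsVertexCover G) C hC
  exact ⟨D, hDC, hD.prop, fun E hED hE => hD.eq_of_le hE hED⟩

lemma mem_symbPow_iff [Finite V] {k : Type*} [Field k] {s : ℕ} {p : MvPolynomial V k} :
    p ∈ symbPow k G s ↔ ∀ m ∈ p.support, ∀ S : Finset V, G.IsIndepSet S →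
      ∑ v ∈ S, m v + s ≤ m.degree := by
  classical
  have := Fintype.ofFinite V
  simp only [symbPow, Submodule.mem_iInf, mem_coverPrime_pow_iff]
  constructor
  · intro hp m hm S hS
    obtain ⟨D, hDS, hD⟩ :=
      (isVertexCover_compl_iff_isIndepSet.2 hS).exists_isMinVertexCover_subset
    calc ∑ v ∈ S, m v + s ≤ ∑ v ∈ S, m v + ∑ v ∈ Sᶜ, m v := by
          gcongr
          exact (hp D hD m hm).trans (Finset.sum_le_sum_of_subset hDS)
      _ = m.degree := by rw [Finset.sum_add_sum_compl, Finsupp.degree_eq_sum]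
  · intro hp C hC m hm
    have hS := hp m hm Cᶜ (isVertexCover_compl_iff_isIndepSet.1 (by simpa using hC.1))
    rw [Finsupp.degree_eq_sum, ← Finset.sum_add_sum_compl C] at hS
    omega

lemma not_symbPow_le_edgeIdeal_pow [Fintype V] (k : Type*) [Field k] {a t : ℕ}
    (hat : a * Fintype.card V < 2 * t) :
    ¬ symbPow k G (a * (Fintype.card V - G.indepNum)) ≤ edgeIdeal k G ^ t := by
  let m : V →₀ ℕ := Finsupp.equivFunOnFinite.symm fun _ => a
  have hdeg : m.degree = a * Fintype.card V := by
    simp [m, Finsupp.degree_eq_sum, mul_comm]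
  have hsymb : monomial m (1 : k) ∈ symbPow k G (a * (Fintype.card V - G.indepNum)) := by
    refine mem_symbPow_iff.2 fun d hd S hS => ?_
    obtain rfl : m = d := (Finset.mem_singleton.1 (support_monomial_subset hd)).symm
    calc ∑ v ∈ S, m v + a * (Fintype.card V - G.indepNum)
        = a * (S.card + (Fintype.card V - G.indepNum)) := by simp [m, mul_add, mul_comm]
      _ ≤ a * (G.indepNum + (Fintype.card V - G.indepNum)) := by
          gcongr
          exact hS.card_le_indepNum
      _ = m.degree := by
          obtain ⟨A, hA⟩ := G.exists_isNIndepSet_indepNum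
          rw [hdeg, Nat.add_sub_of_le (hA.card_eq ▸ A.card_le_univ)]
  intro hle
  have hmem := edgeIdeal_pow_le_pow_idealOfVars G t (hle hsymb)
  rw [monomial_mem_pow_idealOfVars_iff _ _ one_ne_zero] at hmem
  omega

-- A weighted form of Hajnal's lemma on families of maximum independent sets.
lemma two_mul_le_sum_inf_add_sum_sup [Fintype V] [DecidableEq V] {w : V → ℕ} {M : ℕ}
    (hM : ∀ S : Finset V, G.IsIndepSet S → ∑ v ∈ S, w v ≤ M) {F : Finset (Finset V)}
    (hF : F.Nonempty) (hFM : ∀ S ∈ F, G.IsIndepSet S ∧ ∑ v ∈ S, w v = M) :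
    2 * M ≤ ∑ v ∈ F.inf id, w v + ∑ v ∈ F.sup id, w v := by
  induction hF using Finset.Nonempty.cons_induction with
  | singleton S =>
    simp only [Finset.inf_singleton, Finset.sup_singleton, id_eq, (hFM S (by simp)).2]
    omega
  | cons S F hSF hF ih =>
    obtain ⟨hS, hSM⟩ := hFM S (by simp)
    have hFM' : ∀ T ∈ F, G.IsIndepSet T ∧ ∑ v ∈ T, w v = M := fun T hT => hFM T (by simp [hT])
    have ih := ih hFM'
    simp only [Finset.inf_cons, Finset.sup_cons, id_eq, Finset.inf_eq_inter, Finset.sup_eq_union]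
    -- Exchange: `(S ∩ U) ∪ A` is independent, so its weight is at most that of `S`.
    set A := F.inf id
    set U := F.sup id
    have hAU : A ⊆ U := by
      obtain ⟨T, hT⟩ := hF
      exact (Finset.inf_le (f := id) hT).trans (Finset.le_sup (f := id) hT)
    have hAU_adj : ∀ x ∈ A, ∀ y ∈ U, ¬ G.Adj x y := by
      intro x hx y hy hxy
      obtain ⟨T, hT, hyT⟩ := Finset.mem_sup.1 hy
      exact (hFM' T hT).1 (Finset.inf_le (f := id) hT hx) hyT hxy.ne hxy
    have hind : G.IsIndepSet ↑(S ∩ U ∪ A) := by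
      intro x hx y hy hne hxy
      simp only [Finset.coe_union, Finset.coe_inter, Set.mem_union, Set.mem_inter_iff,
        Finset.mem_coe] at hx hy
      rcases hx with ⟨hxS, hxU⟩ | hxA <;> rcases hy with ⟨hyS, hyU⟩ | hyA
      · exact hS hxS hyS hne hxy
      · exact hAU_adj y hyA x hxU hxy.symm
      · exact hAU_adj x hxA y hyU hxy
      · exact hAU_adj x hxA y (hAU hyA) hxy
    have hexch := Finset.sum_union_inter (s₁ := S ∩ U) (s₂ := A) (f := w)
    rw [Finset.inter_assoc, Finset.inter_eq_right.2 hAU] at hexch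
    have hSU := Finset.sum_union_inter (s₁ := S) (s₂ := U) (f := w)
    have := hM _ hind
    omega

lemma exists_pos_of_two_mul_lt_degree [Finite V] {w : V →₀ ℕ} {t : ℕ}
    (ht : 2 * t < w.degree)
    (hw : ∀ S : Finset V, G.IsIndepSet S → ∑ v ∈ S, w v + t ≤ w.degree) :
    ∃ v, 0 < w v ∧
      ∀ S : Finset V, G.IsIndepSet S → v ∉ S → ∑ u ∈ S, w u + t < w.degree := by
  classical
  have := Fintype.ofFinite V
  let F : Finset (Finset V) := {S | G.IsIndepSet S ∧ ∑ v ∈ S, w v = w.degree - t}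
  have hF : ∀ S ∈ F, G.IsIndepSet S ∧ ∑ v ∈ S, w v = w.degree - t := by simp [F]
  have hpos : 0 < ∑ v ∈ F.inf id, w v := by
    rcases F.eq_empty_or_nonempty with hemp | hne
    · simp only [hemp, Finset.inf_empty, Finset.top_eq_univ, ← Finsupp.degree_eq_sum]
      omega
    · have hcore := two_mul_le_sum_inf_add_sum_sup (M := w.degree - t)
        (fun S hS => Nat.le_sub_of_add_le (hw S hS)) hne hF
      have hsup : ∑ v ∈ F.sup id, w v ≤ w.degree := by
        rw [Finsupp.degree_eq_sum]
        exact Finset.sum_le_sum_of_subset (Finset.subset_univ _)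
      omega
  obtain ⟨v, hv, hwv⟩ := Finset.exists_ne_zero_of_sum_ne_zero hpos.ne'
  refine ⟨v, Nat.pos_of_ne_zero hwv, fun S hS hvS => (hw S hS).lt_of_ne fun heq => hvS ?_⟩
  exact Finset.inf_le (f := id) (show S ∈ F by simp [F, hS, ← heq]) hv

lemma exists_le_degree_eq_two_mul [Finite V] {w : V →₀ ℕ} {t : ℕ} (ht : 2 * t ≤ w.degree)
    (hw : ∀ S : Finset V, G.IsIndepSet S → ∑ v ∈ S, w v + t ≤ w.degree) :
    ∃ w' ≤ w, w'.degree = 2 * t ∧ ∀ S : Finset V, G.IsIndepSet S → ∑ v ∈ S, w' v ≤ t := by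
  classical
  obtain ⟨e, he⟩ := Nat.exists_eq_add_of_le ht
  induction e generalizing w with
  | zero => exact ⟨w, le_rfl, he, fun S hS => by have := hw S hS; omega⟩
  | succ e ih =>
    obtain ⟨v, hv, hvS⟩ := exists_pos_of_two_mul_lt_degree (by omega) hw
    obtain ⟨u, rfl⟩ : ∃ u, w = u + Finsupp.single v 1 :=
      ⟨w - .single v 1, (tsub_add_cancel_of_le (Finsupp.single_le_iff.2 hv)).symm⟩
    simp only [map_add, Finsupp.degree_single, Finsupp.add_apply, Finset.sum_add_distrib,
      Finsupp.single_apply, Finset.sum_ite_eq] at he ht hw hvS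
    obtain ⟨w', hw'u, hw'⟩ := ih (w := u) (by omega) (fun S hS => by
      have := hw S hS
      have := hvS S hS
      split_ifs at * <;> grind) (by omega)
    exact ⟨w', hw'u.trans le_self_add, hw'⟩

end IndependentSets

lemma indepNum_mul_sum_add_card_mul_le {V : Type*} [AddGroup V] [Fintype V] (J : Set V)
    {w : V → ℕ} {s : ℕ} (hw : ∀ S : Finset V, (SimpleGraph.circulantGraph J).IsIndepSet S →
      ∑ v ∈ S, w v + s ≤ ∑ v, w v) :
    (SimpleGraph.circulantGraph J).indepNum * ∑ v, w v + Fintype.card V * s ≤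
      Fintype.card V * ∑ v, w v := by
  obtain ⟨A, hA⟩ := (SimpleGraph.circulantGraph J).exists_isNIndepSet_indepNum
  -- Every translate of a maximum independent set `A` is independent; sum over all translates.
  have htranslate (g : V) : ∑ v ∈ A, w (v + g) + s ≤ ∑ v, w v := by
    have := hw (A.map (Equiv.addRight g).toEmbedding) (by
      rw [Finset.coe_map]
      refine ((Equiv.addRight g).injective.injOn.pairwise_image).2 fun x hx y hy hxy hadj => ?_
      exact hA.isIndepSet hx hy hxy (SimpleGraph.circulantGraph_adj_translate.1 hadj))
    simpa using this
  have hsum (v : V) : ∑ g, w (v + g) = ∑ u, w u := Equiv.sum_comp (Equiv.addLeft v) w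
  calc (SimpleGraph.circulantGraph J).indepNum * ∑ v, w v + Fintype.card V * s
      = ∑ g, (∑ v ∈ A, w (v + g) + s) := by
        rw [Finset.sum_add_distrib, Finset.sum_comm]
        simp [hsum, hA.card_eq]
    _ ≤ ∑ _g : V, ∑ v, w v := Finset.sum_le_sum fun g _ => htranslate g
    _ = Fintype.card V * ∑ v, w v := by simp

lemma exists_monotone_comp_sum_single_eq {α β : Type*} [LinearOrder β] (f : α → β) {w : α →₀ ℕ}
    {N : ℕ} (hN : w.degree = N) :
    ∃ y : Fin N → α, Monotone (f ∘ y) ∧ ∑ j, Finsupp.single (y j) 1 = w := by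
  obtain ⟨l, hl⟩ := Quot.exists_rep (Finsupp.toMultiset w)
  obtain rfl : l.length = N := by
    rw [← hN]
    have := congrArg Multiset.card hl
    simpa [Finsupp.sum, Finsupp.degree_apply] using this
  refine ⟨l.get ∘ Tuple.sort (f ∘ l.get), Tuple.monotone_sort (f ∘ l.get), ?_⟩
  refine (Equiv.sum_comp (Tuple.sort (f ∘ l.get)) fun j => Finsupp.single (l.get j) 1).trans ?_
  classical
  apply Multiset.toFinsupp.symm.injective
  calc Finsupp.toMultiset (∑ j, Finsupp.single (l.get j) 1)
      = ∑ j : Fin l.length, ({l[j]} : Multiset α) := by simp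
    _ = (l : Multiset α) :=
        (Fin.sum_univ_fun_getElem l _).trans (Multiset.sum_map_singleton (l : Multiset α))
    _ = Finsupp.toMultiset w := hl

section Gnr

variable {n r : ℕ}

lemma Gnr_adj_iff {a b : ZMod n} :
    (Gnr n r).Adj a b ↔ (r + 1 ≤ b.val - a.val ∧ b.val - a.val ≤ n - (r + 1)) ∨
      (r + 1 ≤ a.val - b.val ∧ a.val - b.val ≤ n - (r + 1)) := by
  rw [Gnr, SimpleGraph.fromRel_adj, and_iff_right_iff_imp]
  rintro h rfl
  omega

lemma Gnr_eq_circulantGraph [NeZero n] :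
    Gnr n r = SimpleGraph.circulantGraph {v | r + 1 ≤ v.val ∧ v.val ≤ n - (r + 1)} := by
  ext a b
  have := a.val_lt
  have := b.val_lt
  rw [Gnr_adj_iff, SimpleGraph.circulantGraph_adj]
  rcases eq_or_ne a b with rfl | hab
  · simp
  have : a.val ≠ b.val := fun h => hab (ZMod.val_injective n h)
  have hneg : (b - a).val + (a - b).val = n := by
    rw [← neg_sub a b, ZMod.neg_val, if_neg (sub_ne_zero.2 hab)]
    exact Nat.sub_add_cancel (a - b).val_lt.le
  simp only [hab, not_false_eq_true, true_and, Set.mem_ofPred_eq]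
  rcases le_total a.val b.val with h | h <;> have := ZMod.val_sub h <;> omega

lemma isIndepSet_Gnr_preimage_Icc {a b : ℕ} (hab : b < a + (r + 1)) :
    (Gnr n r).IsIndepSet (ZMod.val ⁻¹' Set.Icc a b) := by
  intro x hx y hy _
  simp only [Set.mem_preimage, Set.mem_Icc] at hx hy
  rw [Gnr_adj_iff]
  omega

lemma isIndepSet_Gnr_preimage_Ioo_compl [NeZero n] {a b : ℕ} (hbn : b ≤ n)
    (hab : a + n < b + (r + 1)) :
    (Gnr n r).IsIndepSet (ZMod.val ⁻¹' (Set.Ioo a b)ᶜ) := by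
  intro x hx y hy _
  have := x.val_lt
  have := y.val_lt
  simp only [Set.mem_preimage, Set.mem_compl_iff, Set.mem_Ioo] at hx hy
  rw [Gnr_adj_iff]
  omega

lemma card_le_of_isIndepSet_Gnr [NeZero n] (hr : 2 * (r + 1) ≤ n) {S : Finset (ZMod n)}
    (hS : (Gnr n r).IsIndepSet S) : S.card ≤ r + 1 := by
  rcases S.eq_empty_or_nonempty with rfl | hne
  · simp
  obtain ⟨m, hm, hmin⟩ := S.exists_min_image ZMod.val hne
  have hnear (v : ZMod n) (hv : v ∈ S) : v.val - m.val < r + 1 ∨ n - (r + 1) < v.val - m.val := by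
    by_contra! h
    have hadj : (Gnr n r).Adj m v := Gnr_adj_iff.2 (.inl h)
    exact hS hm hv hadj.ne hadj
  -- Two values of `v.val - m.val` differing by `n - (r + 1)` come from adjacent vertices, so the
  -- values above `n - (r + 1)` can be folded back into `[0, r]` without collisions.
  let fold (d : ℕ) : ℕ := if d < r + 1 then d else d - (n - (r + 1))
  have hmaps (v : ZMod n) : fold (v.val - m.val) ∈ Finset.range (r + 1) := by
    have := v.val_lt
    simp only [fold, Finset.mem_range]
    split_ifs <;> omega
  have hinj : Set.InjOn (fun v : ZMod n => fold (v.val - m.val)) S := by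
    intro a ha b hb hab
    by_contra hne
    have hadj : ¬ (Gnr n r).Adj a b := hS ha hb hne
    have := a.val_lt
    have := b.val_lt
    have := hnear a ha
    have := hnear b hb
    have := hmin a ha
    have := hmin b hb
    have : a.val ≠ b.val := fun h => hne (ZMod.val_injective n h)
    rw [Gnr_adj_iff] at hadj
    simp only [fold] at hab
    split_ifs at hab <;> omega
  simpa using Finset.card_le_card_of_injOn _ (fun v _ => hmaps v) hinj

lemma indepNum_Gnr [NeZero n] (hr : 2 * (r + 1) ≤ n) : (Gnr n r).indepNum = r + 1 := by
  apply le_antisymm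
  · obtain ⟨A, hA⟩ := (Gnr n r).exists_isNIndepSet_indepNum
    exact hA.card_eq ▸ card_le_of_isIndepSet_Gnr hr hA.isIndepSet
  · have hval (j : ℕ) (hj : j ∈ Finset.range (r + 1)) : (j : ZMod n).val = j :=
      ZMod.val_cast_of_lt (by have := Finset.mem_range.1 hj; omega)
    have hinj : Set.InjOn (Nat.cast : ℕ → ZMod n) (Finset.range (r + 1)) :=
      Set.LeftInvOn.injOn hval
    have hind : (Gnr n r).IsIndepSet ↑((Finset.range (r + 1)).image (Nat.cast : ℕ → ZMod n)) := by
      refine (isIndepSet_Gnr_preimage_Icc (a := 0) (b := r) (by omega)).mono fun v hv => ?_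
      obtain ⟨j, hj, rfl⟩ := Finset.mem_image.1 hv
      simpa [hval j hj, Nat.lt_succ_iff] using hj
    simpa [Finset.card_image_of_injOn hinj] using hind.card_le_indepNum

lemma Gnr_adj_castAdd_natAdd [NeZero n] {t : ℕ} {y : Fin (t + t) → ZMod n}
    (hy : Monotone (ZMod.val ∘ y))
    (hS : ∀ S : Finset (ZMod n), (Gnr n r).IsIndepSet S →
      Finset.card {j | y j ∈ S} ≤ t) (i : Fin t) :
    (Gnr n r).Adj (y (Fin.castAdd t i)) (y (Fin.natAdd t i)) := by
  classical
  set p := Fin.castAdd t i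
  set q := Fin.natAdd t i
  have hp : p.val = i.val := rfl
  have hq : q.val = t + i.val := rfl
  have := i.is_lt
  have hpq : (y p).val ≤ (y q).val := hy (Fin.le_def.2 (by omega))
  have hcard (J : Finset (Fin (t + t))) (I : Set ℕ) (hJ : ∀ j ∈ J, (y j).val ∈ I)
      (hI : (Gnr n r).IsIndepSet (ZMod.val ⁻¹' I)) : J.card ≤ t := by
    refine (Finset.card_le_card fun j hj => ?_).trans (hS {v | v.val ∈ I} (by
      rwa [Finset.coe_filter_univ]))
    simpa using hJ j hj
  -- Otherwise the arc from `y p` to `y q`, or the complementary one, is independent and contains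
  -- `y j` for `t + 1` indices `j`.
  refine Gnr_adj_iff.2 (.inl ⟨?_, ?_⟩)
  · by_contra! hclose
    have := hcard (Finset.Icc p q) (Set.Icc (y p).val (y q).val)
      (fun j hj => ⟨hy (Finset.mem_Icc.1 hj).1, hy (Finset.mem_Icc.1 hj).2⟩)
      (isIndepSet_Gnr_preimage_Icc (by omega))
    rw [Fin.card_Icc] at this
    omega
  · by_contra! hfar
    have := hcard (Finset.Ioo p q)ᶜ (Set.Ioo (y p).val (y q).val)ᶜ
      (fun j hj => by
        simp only [Finset.mem_compl, Finset.mem_Ioo, not_and_or, not_lt] at hj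
        simp only [Set.mem_compl_iff, Set.mem_Ioo, not_and_or, not_lt]
        exact hj.imp (fun h => hy h) (fun h => hy h))
      (isIndepSet_Gnr_preimage_Ioo_compl (y q).val_lt.le (by omega))
    rw [Finset.card_compl, Fin.card_Ioo, Fintype.card_fin] at this
    omega

lemma monomial_mem_edgeIdeal_Gnr_pow (k : Type*) [Field k] [NeZero n] {w : ZMod n →₀ ℕ} {t : ℕ}
    (hdeg : w.degree = 2 * t)
    (hw : ∀ S : Finset (ZMod n), (Gnr n r).IsIndepSet S → ∑ v ∈ S, w v ≤ t) :
    monomial w (1 : k) ∈ edgeIdeal k (Gnr n r) ^ t := by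
  obtain ⟨y, hy, rfl⟩ := exists_monotone_comp_sum_single_eq ZMod.val (hdeg.trans (two_mul t))
  have hcount (S : Finset (ZMod n)) :
      ∑ v ∈ S, (∑ j, Finsupp.single (y j) 1) v = Finset.card {j | y j ∈ S} := by
    simp only [Finsupp.finsetSum_apply, Finsupp.single_apply]
    rw [Finset.sum_comm]
    simp
  have hadj := Gnr_adj_castAdd_natAdd hy fun S hS => (hcount S).symm.trans_le (hw S hS)
  have hmem (i : Fin t) : (X (y (Fin.castAdd t i)) * X (y (Fin.natAdd t i)) :
      MvPolynomial (ZMod n) k) ∈ edgeIdeal k (Gnr n r) := Ideal.subset_span ⟨_, _, hadj i, rfl⟩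
  have hprod := Ideal.prod_mem_prod (s := Finset.univ) fun i _ => hmem i
  rw [Finset.prod_const, Finset.card_fin, Finset.prod_mul_distrib,
    ← Fin.prod_univ_add fun j => X (y j)] at hprod
  rwa [monomial_sum_one]

lemma mul_le_mul_degree_of_isIndepSet_Gnr [NeZero n] (hr : 2 * (r + 1) ≤ n)
    {w : ZMod n →₀ ℕ} {s : ℕ}
    (hw : ∀ S : Finset (ZMod n), (Gnr n r).IsIndepSet S → ∑ v ∈ S, w v + s ≤ w.degree) :
    n * s ≤ (n - (r + 1)) * w.degree := by
  simp only [Gnr_eq_circulantGraph, Finsupp.degree_eq_sum] at hw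
  have := indepNum_mul_sum_add_card_mul_le _ hw
  rw [← Gnr_eq_circulantGraph, indepNum_Gnr hr, ZMod.card, ← Finsupp.degree_eq_sum] at this
  rw [Nat.sub_mul]
  omega

lemma symbPow_Gnr_le_edgeIdeal_pow (k : Type*) [Field k] [NeZero n] (hr : 2 * (r + 1) ≤ n)
    {s t : ℕ} (hst : 2 * (n - (r + 1)) * t < s * n) :
    symbPow k (Gnr n r) s ≤ edgeIdeal k (Gnr n r) ^ t := by
  intro p hp
  rw [p.as_sum]
  refine Ideal.sum_mem _ fun m hm => ?_
  have hm := mem_symbPow_iff.1 hp m hm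
  have hdeg := mul_le_mul_degree_of_isIndepSet_Gnr hr hm
  have h2t : 2 * t ≤ m.degree := by
    have : (n - (r + 1)) * (2 * t) < (n - (r + 1)) * m.degree := by lia
    exact (Nat.lt_of_mul_lt_mul_left this).le
  have hts : t ≤ s := by
    have : n * t < n * s := calc
      n * t ≤ 2 * (n - (r + 1)) * t := by gcongr; omega
      _ < s * n := hst
      _ = n * s := mul_comm s n
    exact (Nat.lt_of_mul_lt_mul_left this).le
  obtain ⟨w, hwm, hw, hwS⟩ := exists_le_degree_eq_two_mul h2t fun S hS => by
    have := hm S hS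
    omega
  exact Ideal.mem_of_dvd _ (monomial_dvd_monomial.2 ⟨.inr hwm, one_dvd _⟩)
    (monomial_mem_edgeIdeal_Gnr_pow k hw hwS)

end Gnr

lemma isLUB_div_of_forall_mul_le {N : ℕ → ℕ → Prop} {p n : ℕ} (hp : 0 < p) (hn : 0 < n)
    (hle : ∀ s t, N s t → s * n ≤ p * t) (hN : ∀ b, N (p * b) (n * b + 1)) :
    IsLUB {x : ℝ | ∃ s t : ℕ, 0 < s ∧ 0 < t ∧ N s t ∧ x = s / t} (p / n) := by
  have hn' : (n : ℝ) ≠ 0 := by positivity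
  have hlim : Filter.Tendsto (fun b : ℕ => ((p * b : ℕ) : ℝ) / (n * b + 1 : ℕ)) Filter.atTop
      (nhds (p / n)) := by
    simpa [add_comm] using tendsto_add_mul_div_add_mul_atTop_nhds 0 1 (p : ℝ) hn'
  refine isLUB_of_mem_closure ?_ (mem_closure_of_tendsto hlim ?_)
  · rintro _ ⟨s, t, -, ht, hst, rfl⟩
    rw [div_le_div_iff₀ (by positivity) (by positivity)]
    exact_mod_cast hle s t hst
  · filter_upwards [Filter.eventually_gt_atTop 0] with b hb
    exact ⟨_, _, by positivity, by positivity, hN b, rfl⟩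

/-- The resurgence `ρ(I) = sup{s/t : I^{(s)} ⊄ I^t}` of the edge ideal
`I = I(G_{n,r})` equals `2(n-(r+1))/n`. -/
theorem stmt16 {k : Type*} [Field k] (n r : ℕ) (hn : 2 ≤ n) (hr : r ≤ n / 2 - 1) :
    sSup {x : ℝ | ∃ s t : ℕ, 0 < s ∧ 0 < t ∧
        ¬ (symbPow k (Gnr n r) s ≤ (edgeIdeal k (Gnr n r)) ^ t) ∧ x = (s : ℝ) / t} =
      2 * ((n : ℝ) - (r + 1)) / n := by
  have : NeZero n := ⟨by omega⟩
  have hr' : 2 * (r + 1) ≤ n := by omega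
  have hlub := isLUB_div_of_forall_mul_le
    (N := fun s t => ¬ symbPow k (Gnr n r) s ≤ edgeIdeal k (Gnr n r) ^ t)
    (p := 2 * (n - (r + 1))) (n := n) (by omega) (by omega)
    (fun s t hst => not_lt.1 fun h => hst (symbPow_Gnr_le_edgeIdeal_pow k hr' h))
    (fun b => by
      have hlower := not_symbPow_le_edgeIdeal_pow (G := Gnr n r) k (a := 2 * b) (t := n * b + 1)
        (by rw [ZMod.card]; lia)
      rwa [ZMod.card, indepNum_Gnr hr', mul_right_comm] at hlower)
  rw [hlub.csSup_eq hlub.nonempty]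
  push_cast [Nat.cast_sub (show r + 1 ≤ n by omega)]
  rfl
end

section
/- For the edge ideal I = I(G_{n,r}), the Castelnuovo–Mumford regularity of the t-th symbolic power equals that of the t-th ordinary power: reg I^{(t)} = reg I^t for all t ≥ 1. -/
open MvPolynomial

/-- The degree-`m` graded piece of an ideal of the polynomial ring. -/
noncomputable def gradedPiece {k : Type*} [Field k] {σ : Type*}
    (J : Ideal (MvPolynomial σ k)) (m : ℕ) : Submodule k (MvPolynomial σ k) :=
  Submodule.restrictScalars k J ⊓ homogeneousSubmodule σ k m

/-- `J` is `m`-regular, via the Bayer–Stillman criterion: `J` is generated in degrees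
`≤ m`, and there are linear forms `h_1,…,h_ℓ` with
`((J,h_1,…,h_{i-1}) : h_i)_m = (J,h_1,…,h_{i-1})_m` for each `i` and
`(J,h_1,…,h_ℓ)_m = R_m`.  This characterizes `reg J ≤ m`. -/
def IsMRegular {k : Type*} [Field k] {σ : Type*}
    (J : Ideal (MvPolynomial σ k)) (m : ℕ) : Prop :=
  Ideal.span {p | p ∈ J ∧ p.totalDegree ≤ m} = J ∧
  ∃ (ℓ : ℕ) (h : Fin ℓ → MvPolynomial σ k),
    (∀ i, h i ∈ homogeneousSubmodule σ k 1) ∧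
    (∀ i : Fin ℓ,
      gradedPiece (Submodule.colon
          (J ⊔ Ideal.span (h '' {x | x < i})) (Ideal.span {h i})) m =
        gradedPiece (J ⊔ Ideal.span (h '' {x | x < i})) m) ∧
    gradedPiece (J ⊔ Ideal.span (Set.range h)) m = gradedPiece ⊤ m

/-- The Castelnuovo–Mumford regularity of a homogeneous ideal: the least `m` for which
`J` is `m`-regular. -/
noncomputable def reg {k : Type*} [Field k] {σ : Type*} (J : Ideal (MvPolynomial σ k)) : ℕ :=
  sInf {m : ℕ | IsMRegular J m}

/-!
Let `I` be the edge ideal of a graph in which the non-neighbours of every vertex induce a bipartite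
graph. The ideals `I ^ t` and `I^(t)` agree in degrees `≥ 2t`: a monomial `x^a` is a product over
the vertices of the blow-up replacing each vertex `i` by `a i` copies, so it suffices to find `t`
disjoint edges there, given that every vertex cover has at least `t` elements and that there are at
least `2t` vertices. Adding universal vertices reduces this to a perfect matching, and Tutte's
theorem applies: removing a violator `U` leaves a disconnected graph, each component of which
consists of non-neighbours of a vertex in another one and so is bipartite; the minority colour
classes together with `U` form a vertex cover that is too small.

If there is an edge `ij`, every ideal between `I ^ t` and `I^(t)` contains `(x_i x_j)^t`, and no
element of smaller degree involves a divisor of this monomial, so such an ideal is not generated in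
degrees `< 2t`. Hence both regularities are at least `2t`, and from there on `m`-regularity depends
only on graded pieces of degree at least `2t`.
-/

open scoped Finset

section Graph

variable {V W ι : Type*} {G : SimpleGraph V}

/-- The vertices not adjacent to any given vertex `v` induce a bipartite subgraph. Since `v` itself
is isolated among them, it makes no difference that it is included. This is the property of
`Gnr n r` behind the equality of regularities. -/
def HasBipartiteNonNeighbors (G : SimpleGraph V) : Prop :=
  ∀ v, (G.induce {w | ¬ G.Adj v w}).IsBipartite

/-- The join of `G` with the complete graph on `ι`: every vertex in `ι` is adjacent to all other
vertices. Its perfect matchings restrict to matchings of `G` missing at most `card ι` vertices. -/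
def joinTop (G : SimpleGraph V) (ι : Type*) : SimpleGraph (V ⊕ ι) :=
  (Gᶜ ⊕g ⊥)ᶜ

@[simp]
theorem joinTop_adj_inl_inl {u v : V} : (joinTop G ι).Adj (.inl u) (.inl v) ↔ G.Adj u v := by
  simp only [joinTop, SimpleGraph.compl_adj, SimpleGraph.sum_adj_inl, ne_eq, Sum.inl.injEq]
  exact ⟨fun h => by tauto, fun h => ⟨h.ne, fun h' => h'.2 h⟩⟩

@[simp]
theorem joinTop_adj_inr {i : ι} {x : V ⊕ ι} : (joinTop G ι).Adj (.inr i) x ↔ .inr i ≠ x := by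
  cases x <;> simp [joinTop]

theorem hasBipartiteNonNeighbors_joinTop (hG : HasBipartiteNonNeighbors G) (ι : Type*) :
    HasBipartiteNonNeighbors (joinTop G ι) := by
  rintro (v | i)
  · have hinl : ∀ x : {x | ¬ (joinTop G ι).Adj (.inl v) x}, ∃ w, ¬ G.Adj v w ∧ x.1 = .inl w := by
      rintro ⟨w | j, hx⟩
      · exact ⟨w, by simpa using hx, rfl⟩
      · exact absurd (joinTop_adj_inr.2 Sum.inr_ne_inl).symm hx
    choose f hf hfx using hinl
    refine (hG v).of_hom ⟨fun x => ⟨f x, hf x⟩, fun {x y} hxy => ?_⟩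
    simpa [hfx] using hxy
  · have heq (x : {x | ¬ (joinTop G ι).Adj (.inr i) x}) : x.1 = .inr i := by
      have hx := x.2
      simp only [Set.mem_ofPred_eq, joinTop_adj_inr, ne_eq, not_not] at hx
      exact hx.symm
    exact ⟨⟨fun _ => 0, fun {x y} hxy => (hxy.ne (Subtype.ext ((heq x).trans (heq y).symm))).elim⟩⟩

namespace HasBipartiteNonNeighbors

theorem comap (hG : HasBipartiteNonNeighbors G) (f : W → V) :
    HasBipartiteNonNeighbors (G.comap f) := fun w =>
  (hG (f w)).of_hom ⟨fun x => ⟨f x, x.2⟩, id⟩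

theorem isBipartite_of_not_preconnected (hG : HasBipartiteNonNeighbors G)
    (h : ¬ G.Preconnected) : G.IsBipartite := by
  refine SimpleGraph.colorable_iff_forall_connectedComponent.2 fun c => ?_
  obtain ⟨v, hv⟩ : ∃ v, v ∉ c.supp := by
    by_contra! hc
    exact h fun u w => SimpleGraph.ConnectedComponent.exact ((hc u).trans (hc w).symm)
  have hsub : c.supp ⊆ {w | ¬ G.Adj v w} := fun w hw hvw =>
    hv (c.mem_supp_of_adj_mem_supp hw hvw.symm)
  exact (hG v).of_hom (SimpleGraph.induceHomOfLE G hsub).toHom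

end HasBipartiteNonNeighbors

theorem exists_two_mul_card_fiber_add_mod_two_le (s : Finset V) (f : V → Fin 2) :
    ∃ b, 2 * #{v ∈ s | f v = b} + #s % 2 ≤ #s := by
  have hsplit : #s = #{v ∈ s | f v = 0} + #{v ∈ s | f v = 1} :=
    (Finset.card_eq_sum_card_fiberwise fun v _ => Finset.mem_univ (f v)).trans
      (Fin.sum_univ_two _)
  by_contra! hlt
  have h0 := hlt 0
  have h1 := hlt 1
  omega

theorem isVertexCover_union_map_subtype [DecidableEq V] {s : Set V} {U : Finset V} {C : Finset s}
    (hU : ∀ v ∉ s, v ∈ U) (hC : IsVertexCover (G.induce s) C) :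
    IsVertexCover G (U ∪ C.map (.subtype (· ∈ s))) := fun u v huv => by
  by_contra! hnotin
  simp only [Finset.mem_union, Finset.mem_map, not_or, not_exists] at hnotin
  obtain ⟨⟨huU, huC⟩, hvU, hvC⟩ := hnotin
  have hus : u ∈ s := by_contra fun h => huU (hU u h)
  have hvs : v ∈ s := by_contra fun h => hvU (hU v h)
  have hadj : (G.induce s).Adj ⟨u, hus⟩ ⟨v, hvs⟩ := huv
  exact (hC hadj).elim (fun h => huC _ ⟨h, rfl⟩) fun h => hvC _ ⟨h, rfl⟩

theorem ncard_oddComponents_eq_sum [Fintype G.ConnectedComponent] :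
    G.oddComponents.ncard = ∑ c : G.ConnectedComponent, c.supp.ncard % 2 := by
  classical
  have hset : G.oddComponents = ({c | c.supp.ncard % 2 = 1} : Finset G.ConnectedComponent) := by
    ext c
    simp [Nat.odd_iff]
  rw [hset, Set.ncard_coe_finset, Finset.card_filter]
  refine Finset.sum_congr rfl fun c _ => ?_
  rcases Nat.mod_two_eq_zero_or_one c.supp.ncard with h | h <;> simp [h]

section Matching

variable [Fintype V]

-- The cover consists of the smaller colour class of every component.
theorem exists_isVertexCover_of_isBipartite (hG : G.IsBipartite) :
    ∃ C : Finset V, IsVertexCover G C ∧ 2 * #C + G.oddComponents.ncard ≤ Fintype.card V := by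
  classical
  obtain ⟨f⟩ := hG
  have hminority (c : G.ConnectedComponent) :=
    exists_two_mul_card_fiber_add_mod_two_le {v | G.connectedComponentMk v = c} f
  choose b hb using hminority
  refine ⟨({v | f v = b (G.connectedComponentMk v)} : Finset V), fun u v huv => ?_, ?_⟩
  · have hcomp : G.connectedComponentMk v = G.connectedComponentMk u :=
      SimpleGraph.ConnectedComponent.sound huv.reachable.symm
    have hne : f u ≠ f v := f.valid huv
    simp only [Finset.mem_filter_univ, hcomp]
    omega
  · have hcover : #{v | f v = b (G.connectedComponentMk v)} =
        ∑ c, #{v ∈ ({v | G.connectedComponentMk v = c} : Finset V) | f v = b c} := by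
      rw [Finset.card_eq_sum_card_fiberwise (f := G.connectedComponentMk) (t := Finset.univ)
        fun v _ => Finset.mem_univ _]
      refine Finset.sum_congr rfl fun c _ => congrArg _ ?_
      ext v
      simp only [Finset.mem_filter, Finset.mem_univ, true_and]
      exact ⟨fun h => ⟨h.2, h.2 ▸ h.1⟩, fun h => ⟨h.1 ▸ h.2, h.1⟩⟩
    have hcard : Fintype.card V = ∑ c, #{v | G.connectedComponentMk v = c} :=
      Finset.card_eq_sum_card_fiberwise fun v _ => Finset.mem_univ _
    have hsupp (c : G.ConnectedComponent) : c.supp.ncard = #{v | G.connectedComponentMk v = c} := by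
      simp [← Set.ncard_coe_finset, SimpleGraph.ConnectedComponent.supp]
    have hodd : G.oddComponents.ncard = ∑ c, #{v | G.connectedComponentMk v = c} % 2 := by
      simp only [ncard_oddComponents_eq_sum, hsupp]
    rw [hcover, hcard, hodd, Finset.mul_sum, ← Finset.sum_add_distrib]
    exact Finset.sum_le_sum fun c _ => hb c

theorem HasBipartiteNonNeighbors.exists_isPerfectMatching (hG : HasBipartiteNonNeighbors G)
    (heven : Even (Fintype.card V))
    (hcover : ∀ C, IsVertexCover G C → Fintype.card V ≤ 2 * #C) :
    ∃ M : G.Subgraph, M.IsPerfectMatching := by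
  classical
  refine SimpleGraph.tutte.2 fun U hU => ?_
  rw [SimpleGraph.IsTutteViolator] at hU
  set S : G.Subgraph := (⊤ : G.Subgraph).deleteVerts U with hS
  have hSU : S.verts = Uᶜ := by simp [hS, Set.compl_eq_univ_sdiff]
  have hind : S.coe = G.induce S.verts := by
    ext x y
    have hx : x.1 ∉ U := x.2.2
    have hy : y.1 ∉ U := y.2.2
    simp [hS, hx, hy]
  have hcard : U.ncard + Fintype.card S.verts = Fintype.card V := by
    rw [← Nat.card_eq_fintype_card, Nat.card_coe_set_eq, hSU, Set.ncard_add_ncard_compl,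
      Nat.card_eq_fintype_card]
  have hparity : Odd S.coe.oddComponents.ncard ↔ Odd (Fintype.card S.verts) := by
    rw [S.coe.odd_ncard_oddComponents, Nat.card_eq_fintype_card]
  -- By parity, a Tutte violator leaves at least two odd components.
  have hnot : ¬ S.coe.Preconnected := fun hpre => by
    have := hpre.subsingleton_connectedComponent
    have hle := Set.ncard_le_one_of_subsingleton S.coe.oddComponents
    simp only [Nat.odd_iff, Nat.even_iff] at hparity heven
    omega
  have hbip : S.coe.IsBipartite := by
    rw [hind] at hnot ⊢
    exact (hG.comap _).isBipartite_of_not_preconnected hnot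
  obtain ⟨C, hC, hCcard⟩ := exists_isVertexCover_of_isBipartite hbip
  have hCU : IsVertexCover G (U.toFinset ∪ C.map (.subtype (· ∈ S.verts))) := by
    rw [hind] at hC
    exact isVertexCover_union_map_subtype (fun v hv => by simpa [hSU] using hv) hC
  have hVle := hcover _ hCU
  have hle := Finset.card_union_le U.toFinset (C.map (.subtype (· ∈ S.verts)))
  rw [Finset.card_map, ← Set.ncard_eq_toFinset_card'] at hle
  omega

theorem IsVertexCover.toLeft_or_card_le_of_joinTop [Fintype ι] {C : Finset (V ⊕ ι)}
    (hC : IsVertexCover (joinTop G ι) C) :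
    IsVertexCover G C.toLeft ∧ C.toRight = Finset.univ ∨ Fintype.card (V ⊕ ι) ≤ #C + 1 := by
  classical
  by_cases hall : ∀ i, .inr i ∈ C
  · refine .inl ⟨fun u v huv => ?_, by ext i; simp [hall]⟩
    simpa using hC (joinTop_adj_inl_inl.2 huv)
  · push Not at hall
    obtain ⟨i, hi⟩ := hall
    have hsub : Finset.univ.erase (.inr i) ⊆ C := fun x hx =>
      (hC (joinTop_adj_inr.2 (Finset.ne_of_mem_erase hx).symm)).resolve_left hi
    have hcard := Finset.card_le_card hsub
    rw [Finset.card_erase_of_mem (Finset.mem_univ _), Finset.card_univ] at hcard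
    exact .inr (Nat.sub_le_iff_le_add.1 hcard)

theorem exists_isMatching_of_joinTop [Fintype ι] {M : (joinTop G ι).Subgraph}
    (hM : M.IsPerfectMatching) :
    ∃ N : G.Subgraph, N.IsMatching ∧ Fintype.card V ≤ N.verts.ncard + Fintype.card ι := by
  let N : G.Subgraph :=
    { verts := {v | ∃ w, M.Adj (.inl v) (.inl w)}
      Adj := fun v w => M.Adj (.inl v) (.inl w)
      adj_sub := fun h => joinTop_adj_inl_inl.1 h.adj_sub
      edge_vert := fun h => ⟨_, h⟩
      symm := ⟨fun _ _ h => h.symm⟩ }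
  refine ⟨N, fun v ⟨w, hvw⟩ => ⟨w, hvw, fun w' hvw' =>
    Sum.inl_injective (hM.1.eq_of_adj_left hvw' hvw)⟩, ?_⟩
  have hpartner (v : ↥N.vertsᶜ) : ∃ i, M.Adj (.inl v.1) (.inr i) := by
    obtain ⟨w | i, hvx, -⟩ := hM.1 (hM.2 (.inl v.1))
    · exact absurd ⟨w, hvx⟩ v.2
    · exact ⟨i, hvx⟩
  choose p hp using hpartner
  have hp_inj : Function.Injective p := fun u v huv =>
    Subtype.ext (Sum.inl_injective (hM.1.eq_of_adj_right (hp u) (huv ▸ hp v)))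
  have hcompl : N.vertsᶜ.ncard ≤ Fintype.card ι := by
    rw [← Nat.card_coe_set_eq, ← Nat.card_eq_fintype_card]
    exact Nat.card_le_card_of_injective p hp_inj
  rw [← Nat.card_eq_fintype_card, ← Set.ncard_add_ncard_compl N.verts]
  omega

theorem prod_mem_pow_of_isMatching {R : Type*} [CommSemiring R] {I : Ideal R} {y : V → R}
    (hy : ∀ ⦃u v⦄, G.Adj u v → y u * y v ∈ I) {M : G.Subgraph} (hM : M.IsMatching) {t : ℕ}
    (ht : 2 * t ≤ M.verts.ncard) : ∏ v, y v ∈ I ^ t := by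
  classical
  have hfiber (e : M.edgeSet) : ∃ u v : M.verts, M.Adj u v ∧
      ({w | hM.toEdge w = e} : Finset M.verts) = {u, v} := by
    obtain ⟨⟨u, v⟩, huv : M.Adj u v⟩ := e
    refine ⟨⟨u, huv.fst_mem⟩, ⟨v, huv.snd_mem⟩, huv, ?_⟩
    ext x
    simpa using Set.ext_iff.1 (hM.toEdge_preimage_singleton huv) x
  have hcard : M.verts.ncard = Fintype.card M.edgeSet * 2 := by
    rw [← Nat.card_coe_set_eq, Nat.card_eq_fintype_card, ← Finset.card_univ,
      Finset.card_eq_sum_card_fiberwise (f := hM.toEdge) (t := Finset.univ)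
        fun v _ => Finset.mem_univ _, ← Finset.card_univ]
    refine Finset.sum_const_nat fun e _ => ?_
    obtain ⟨u, v, huv, he⟩ := hfiber e
    rw [he, Finset.card_pair fun h => huv.ne (congrArg _ h)]
  have hverts : ∏ v : M.verts, y v ∈ I ^ Fintype.card M.edgeSet := by
    rw [← Finset.prod_fiberwise Finset.univ hM.toEdge, ← Finset.card_univ, ← Finset.prod_const]
    refine Ideal.prod_mem_prod fun e _ => ?_
    obtain ⟨u, v, huv, he⟩ := hfiber e
    rw [he, Finset.prod_pair fun h => huv.ne (congrArg _ h)]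
    exact hy huv.adj_sub
  rw [← Fintype.prod_subtype_mul_prod_subtype (· ∈ M.verts)]
  exact Ideal.mul_mem_right _ _ (Ideal.pow_le_pow_right (by omega) hverts)

theorem HasBipartiteNonNeighbors.exists_isMatching (hG : HasBipartiteNonNeighbors G) {t : ℕ}
    (ht : 2 * t ≤ Fintype.card V) (hcover : ∀ C, IsVertexCover G C → t ≤ #C) :
    ∃ M : G.Subgraph, M.IsMatching ∧ 2 * t ≤ M.verts.ncard := by
  classical
  obtain ⟨d, hd⟩ := Nat.exists_eq_add_of_le ht
  have hcard : Fintype.card (V ⊕ Fin d) = 2 * (t + d) := by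
    rw [Fintype.card_sum, Fintype.card_fin]
    omega
  have hjoin (C) (hC : IsVertexCover (joinTop G (Fin d)) C) :
      Fintype.card (V ⊕ Fin d) ≤ 2 * #C := by
    rcases hC.toLeft_or_card_le_of_joinTop with ⟨hleft, hright⟩ | hle
    · have hcardC := C.card_toLeft_add_card_toRight
      rw [hright, Finset.card_univ, Fintype.card_fin] at hcardC
      have := hcover _ hleft
      omega
    · omega
  obtain ⟨M, hM⟩ := (hasBipartiteNonNeighbors_joinTop hG (Fin d)).exists_isPerfectMatching
    (hcard ▸ even_two_mul _) hjoin
  obtain ⟨N, hN, hNcard⟩ := exists_isMatching_of_joinTop hM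
  rw [Fintype.card_fin] at hNcard
  exact ⟨N, hN, by omega⟩

end Matching
end Graph

section GeneratedInDegree

variable {R σ : Type*} [CommSemiring R] {J : Ideal (MvPolynomial σ R)} {m m' : ℕ}

attribute [local instance] MvPolynomial.gradedAlgebra

/-- `J` is generated by its elements of total degree at most `m`, the first of the conditions in
`IsMRegular`. Such elements need not be homogeneous. -/
def IsGeneratedInDegreeLE (J : Ideal (MvPolynomial σ R)) (m : ℕ) : Prop :=
  Ideal.span {p | p ∈ J ∧ p.totalDegree ≤ m} = J

theorem isGeneratedInDegreeLE_iff_le :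
    IsGeneratedInDegreeLE J m ↔ J ≤ Ideal.span {p | p ∈ J ∧ p.totalDegree ≤ m} :=
  ⟨ge_of_eq, fun h => (Ideal.span_le.2 fun _ hp => hp.1).antisymm h⟩

theorem IsGeneratedInDegreeLE.mono (hJ : IsGeneratedInDegreeLE J m) (hm : m ≤ m') :
    IsGeneratedInDegreeLE J m' :=
  isGeneratedInDegreeLE_iff_le.2 <|
    hJ.ge.trans <| Ideal.span_mono fun _ hp => ⟨hp.1, hp.2.trans hm⟩

theorem isGeneratedInDegreeLE_span_pow {s : Set (MvPolynomial σ R)}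
    (hs : ∀ p ∈ s, p.totalDegree ≤ m) (t : ℕ) :
    IsGeneratedInDegreeLE (Ideal.span s ^ t) (t * m) := by
  refine isGeneratedInDegreeLE_iff_le.2 ?_
  induction t with
  | zero =>
    have hone : (1 : MvPolynomial σ R) ∈ {p | p ∈ Ideal.span s ^ 0 ∧ p.totalDegree ≤ 0 * m} := by
      simp
    rw [(Ideal.eq_top_iff_one _).2 (Ideal.subset_span hone)]
    exact le_top
  | succ t ih =>
    conv_lhs => rw [pow_succ]
    refine (Ideal.mul_mono_left ih).trans ?_
    rw [Ideal.span_mul_span', Ideal.span_le]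
    rintro _ ⟨p, ⟨hp, hpt⟩, q, hq, rfl⟩
    refine Ideal.subset_span ⟨?_, ?_⟩
    · rw [pow_succ]
      exact Ideal.mul_mem_mul hp (Ideal.subset_span hq)
    · rw [add_one_mul]
      exact (totalDegree_mul p q).trans (Nat.add_le_add hpt (hs q hq))

theorem isHomogeneous_pow (hJ : J.IsHomogeneous (homogeneousSubmodule σ R)) (t : ℕ) :
    (J ^ t).IsHomogeneous (homogeneousSubmodule σ R) := by
  induction t with
  | zero =>
    rw [pow_zero, Ideal.one_eq_top]
    exact Ideal.IsHomogeneous.top _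
  | succ t ih =>
    rw [pow_succ]
    exact ih.mul hJ

end GeneratedInDegree

section Regularity

variable {k σ : Type*} [Field k] {J J' H : Ideal (MvPolynomial σ k)} {m : ℕ}

attribute [local instance] MvPolynomial.gradedAlgebra

theorem mem_gradedPiece {p : MvPolynomial σ k} :
    p ∈ gradedPiece J m ↔ p ∈ J ∧ p.IsHomogeneous m := Iff.rfl

theorem homogeneousComponent_mem_gradedPiece (hJ : J.IsHomogeneous (homogeneousSubmodule σ k))
    {p : MvPolynomial σ k} (hp : p ∈ J) (m : ℕ) : homogeneousComponent m p ∈ gradedPiece J m :=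
  ⟨homogeneousComponent_mem_of_mem hJ hp m, homogeneousComponent_isHomogeneous m p⟩

theorem gradedPiece_mono (h : J ≤ J') (m : ℕ) : gradedPiece J m ≤ gradedPiece J' m :=
  fun _ hp => ⟨h hp.1, hp.2⟩

theorem gradedPiece_sup (hJ : J.IsHomogeneous (homogeneousSubmodule σ k))
    (hH : H.IsHomogeneous (homogeneousSubmodule σ k)) (m : ℕ) :
    gradedPiece (J ⊔ H) m = gradedPiece J m ⊔ gradedPiece H m := by
  refine le_antisymm (fun p ⟨hp, hpm⟩ => ?_)
    (sup_le (gradedPiece_mono le_sup_left m) (gradedPiece_mono le_sup_right m))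
  obtain ⟨a, ha, b, hb, rfl⟩ := Submodule.mem_sup.1 hp
  rw [← homogeneousComponent_eq_self hpm, map_add]
  exact Submodule.add_mem_sup (homogeneousComponent_mem_gradedPiece hJ ha m)
    (homogeneousComponent_mem_gradedPiece hH hb m)

theorem gradedPiece_colon_congr {d : ℕ} {y : MvPolynomial σ k} (hy : y.IsHomogeneous d)
    (h : gradedPiece J (m + d) = gradedPiece J' (m + d)) :
    gradedPiece (J.colon (Ideal.span {y})) m = gradedPiece (J'.colon (Ideal.span {y})) m := by
  ext p
  simp only [mem_gradedPiece, Ideal.mem_colon_span_singleton]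
  refine and_congr_left fun hp => ?_
  have hmem := SetLike.ext_iff.1 h (p * y)
  simpa only [mem_gradedPiece, hp.mul hy, and_true] using hmem

theorem IsGeneratedInDegreeLE.of_le (hJ : IsGeneratedInDegreeLE J m) (hle : J ≤ J')
    (hJ' : J'.IsHomogeneous (homogeneousSubmodule σ k))
    (hpiece : ∀ d, m < d → gradedPiece J d = gradedPiece J' d) : IsGeneratedInDegreeLE J' m := by
  refine isGeneratedInDegreeLE_iff_le.2 fun p hp => ?_
  rw [← sum_homogeneousComponent p]
  refine Ideal.sum_mem _ fun d _ => ?_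
  have hd := homogeneousComponent_mem_gradedPiece hJ' hp d
  rcases le_or_gt d m with hdm | hdm
  · exact Ideal.subset_span ⟨hd.1, IsHomogeneous.totalDegree_le hd.2 |>.trans hdm⟩
  · rw [← hpiece d hdm] at hd
    exact Ideal.span_mono (Set.inter_subset_inter_left _ hle) (hJ.ge hd.1)

theorem isMRegular_congr (hJ : J.IsHomogeneous (homogeneousSubmodule σ k))
    (hJ' : J'.IsHomogeneous (homogeneousSubmodule σ k))
    (hgen : IsGeneratedInDegreeLE J m) (hgen' : IsGeneratedInDegreeLE J' m)
    (hm : gradedPiece J m = gradedPiece J' m)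
    (hm_succ : gradedPiece J (m + 1) = gradedPiece J' (m + 1)) :
    IsMRegular J m ↔ IsMRegular J' m := by
  refine and_congr (iff_of_true hgen hgen') <| exists_congr fun ℓ => exists_congr fun h =>
    and_congr_right fun hlin => ?_
  have hsup {s : Set (Fin ℓ)} {d : ℕ} (hd : gradedPiece J d = gradedPiece J' d) :
      gradedPiece (J ⊔ Ideal.span (h '' s)) d = gradedPiece (J' ⊔ Ideal.span (h '' s)) d := by
    have hspan : (Ideal.span (h '' s)).IsHomogeneous (homogeneousSubmodule σ k) := by
      refine Ideal.homogeneous_span _ _ ?_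
      rintro _ ⟨i, -, rfl⟩
      exact ⟨1, hlin i⟩
    rw [gradedPiece_sup hJ hspan, gradedPiece_sup hJ' hspan, hd]
  refine and_congr (forall_congr' fun i => ?_) ?_
  · rw [gradedPiece_colon_congr (hlin i) (hsup hm_succ), hsup hm]
  · rw [← Set.image_univ, hsup hm]

theorem reg_congr {s : ℕ} (hle : J ≤ J') (hJ : J.IsHomogeneous (homogeneousSubmodule σ k))
    (hJ' : J'.IsHomogeneous (homogeneousSubmodule σ k)) (hgen : IsGeneratedInDegreeLE J s)
    (hpiece : ∀ d, s ≤ d → gradedPiece J d = gradedPiece J' d)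
    (hs : ∀ m, IsGeneratedInDegreeLE J m → s ≤ m) (hs' : ∀ m, IsGeneratedInDegreeLE J' m → s ≤ m) :
    reg J = reg J' := by
  have hiff (m) (hm : s ≤ m) : IsMRegular J m ↔ IsMRegular J' m :=
    isMRegular_congr hJ hJ' (hgen.mono hm)
      ((hgen.mono hm).of_le hle hJ' fun d hd => hpiece d (hm.trans hd.le))
      (hpiece m hm) (hpiece (m + 1) (hm.trans m.le_succ))
  refine congrArg sInf (Set.ext fun m => ⟨fun h => ?_, fun h => ?_⟩)
  · exact (hiff m (hs m h.1)).1 h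
  · exact (hiff m (hs' m h.1)).2 h

end Regularity

section EdgeIdeal

variable {k V : Type*} [Field k] {G : SimpleGraph V} {t : ℕ}

attribute [local instance] MvPolynomial.gradedAlgebra

theorem X_mul_X_mem_edgeIdeal {i j : V} (hij : G.Adj i j) : X i * X j ∈ edgeIdeal k G :=
  Ideal.subset_span ⟨i, j, hij, rfl⟩

theorem edgeIdeal_le_coverPrime {C : Finset V} (hC : IsVertexCover G C) :
    edgeIdeal k G ≤ coverPrime k C := by
  refine Ideal.span_le.2 ?_
  rintro _ ⟨i, j, hij, rfl⟩
  rcases hC hij with hi | hj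
  · exact Ideal.mul_mem_right _ _ (Ideal.subset_span ⟨i, hi, rfl⟩)
  · exact Ideal.mul_mem_left _ _ (Ideal.subset_span ⟨j, hj, rfl⟩)

theorem edgeIdeal_pow_le_symbPow (G : SimpleGraph V) (t : ℕ) :
    edgeIdeal k G ^ t ≤ symbPow k G t :=
  le_iInf₂ fun _ hC => Ideal.pow_right_mono (edgeIdeal_le_coverPrime hC.1) t

theorem symbPow_le_coverPrime_pow {C : Finset V} (hC : IsVertexCover G C) (t : ℕ) :
    symbPow k G t ≤ coverPrime k C ^ t := by
  obtain ⟨D, hDC, hD⟩ := exists_minimal_le_of_wellFoundedLT (IsVertexCover G) C hC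
  have hDmin : IsMinVertexCover G D := ⟨hD.1, fun E hE hEcover => hE.antisymm (hD.2 hEcover hE)⟩
  exact (iInf₂_le D hDmin).trans
    (Ideal.pow_right_mono (Ideal.span_mono (Set.image_mono (Finset.coe_subset.2 hDC))) t)

theorem symbPow_bot (t : ℕ) : symbPow k (⊥ : SimpleGraph V) t = edgeIdeal k ⊥ ^ t := by
  have hcover : IsVertexCover (⊥ : SimpleGraph V) ∅ := fun _ _ h => h.elim
  refine le_antisymm ?_ (edgeIdeal_pow_le_symbPow ⊥ t)
  simpa [coverPrime, edgeIdeal] using symbPow_le_coverPrime_pow (k := k) hcover t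

theorem le_sum_of_mem_coverPrime_pow {C : Finset V} {p : MvPolynomial V k}
    (hp : p ∈ coverPrime k C ^ t) {u : V →₀ ℕ} (hu : u ∈ p.support) : t ≤ ∑ i ∈ C, u i := by
  classical
  induction t generalizing p u with
  | zero => exact Nat.zero_le _
  | succ t ih =>
    rw [pow_succ] at hp
    induction hp using Submodule.mul_induction_on' generalizing u with
    | mem_mul_mem p hp q hq =>
      obtain ⟨x, hx, y, hy, rfl⟩ := Finset.mem_add.1 (support_mul p q hu)
      obtain ⟨i, hiC, hi⟩ := mem_ideal_span_X_image.1 hq y hy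
      have hyC : y i ≤ ∑ i ∈ C, y i := Finset.single_le_sum (fun _ _ => Nat.zero_le _) hiC
      have hxC := ih hp hx
      simp only [Finsupp.add_apply, Finset.sum_add_distrib]
      omega
    | add p _ q _ hp hq =>
      exact (Finset.mem_union.1 (support_add hu)).elim hp hq

theorem isHomogeneous_edgeIdeal (G : SimpleGraph V) :
    (edgeIdeal k G).IsHomogeneous (homogeneousSubmodule V k) := by
  refine Ideal.homogeneous_span _ _ ?_
  rintro _ ⟨i, j, -, rfl⟩
  exact ⟨2, (isHomogeneous_X k i).mul (isHomogeneous_X k j)⟩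

theorem isHomogeneous_symbPow (G : SimpleGraph V) (t : ℕ) :
    (symbPow k G t).IsHomogeneous (homogeneousSubmodule V k) := by
  refine Ideal.IsHomogeneous.iInf₂ fun C _ => isHomogeneous_pow (Ideal.homogeneous_span _ _ ?_) t
  rintro _ ⟨i, -, rfl⟩
  exact ⟨1, isHomogeneous_X k i⟩

theorem isGeneratedInDegreeLE_edgeIdeal_pow (G : SimpleGraph V) (t : ℕ) :
    IsGeneratedInDegreeLE (edgeIdeal k G ^ t) (2 * t) := by
  rw [mul_comm]
  refine isGeneratedInDegreeLE_span_pow ?_ t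
  rintro _ ⟨i, j, -, rfl⟩
  exact ((isHomogeneous_X k i).mul (isHomogeneous_X k j)).totalDegree_le

theorem le_sum_of_mem_symbPow {p : MvPolynomial V k} (hp : p ∈ symbPow k G t) {u : V →₀ ℕ}
    (hu : u ∈ p.support) {C : Finset V} (hC : IsVertexCover G C) : t ≤ ∑ i ∈ C, u i :=
  le_sum_of_mem_coverPrime_pow (symbPow_le_coverPrime_pow hC t hp) hu

theorem exists_isVertexCover_sum_le_card [Finite V] {a : V → ℕ} {C : Finset (Σ i, Fin (a i))}
    (hC : IsVertexCover (G.comap Sigma.fst) C) :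
    ∃ D : Finset V, IsVertexCover G D ∧ ∑ i ∈ D, a i ≤ #C := by
  classical
  have := Fintype.ofFinite V
  set D : Finset V := {i | ∀ x : Fin (a i), ⟨i, x⟩ ∈ C} with hD
  refine ⟨D, fun i j hij => ?_, ?_⟩
  · by_contra! hnotin
    simp only [hD, Finset.mem_filter_univ, not_forall] at hnotin
    obtain ⟨⟨x, hx⟩, y, hy⟩ := hnotin
    have hadj : (G.comap Sigma.fst).Adj (⟨i, x⟩ : Σ i, Fin (a i)) ⟨j, y⟩ := hij
    exact (hC hadj).elim hx hy
  · have hsub : D.sigma (fun _ => Finset.univ) ⊆ C := fun ⟨i, x⟩ hix =>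
      (Finset.mem_filter_univ i).1 (Finset.mem_sigma.1 hix).1 x
    simpa only [Finset.card_sigma, Finset.card_univ, Fintype.card_fin] using
      Finset.card_le_card hsub

theorem monomial_mem_edgeIdeal_pow [Finite V] (hG : HasBipartiteNonNeighbors G) {a : V →₀ ℕ}
    (ha : 2 * t ≤ a.degree) (hcover : ∀ C, IsVertexCover G C → t ≤ ∑ i ∈ C, a i) :
    monomial a (1 : k) ∈ edgeIdeal k G ^ t := by
  have := Fintype.ofFinite V
  have hcard : Fintype.card (Σ i, Fin (a i)) = a.degree := by
    simp [Fintype.card_sigma, Finsupp.degree_eq_sum]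
  obtain ⟨M, hM, hMcard⟩ := (hG.comap (Sigma.fst : (Σ i, Fin (a i)) → V)).exists_isMatching
    (hcard ▸ ha) fun C hC =>
      let ⟨D, hD, hDC⟩ := exists_isVertexCover_sum_le_card hC
      (hcover D hD).trans hDC
  have hedge ⦃x y : Σ i, Fin (a i)⦄ (hxy : (G.comap Sigma.fst).Adj x y) :
      (X x.1 * X y.1 : MvPolynomial V k) ∈ edgeIdeal k G := X_mul_X_mem_edgeIdeal hxy
  have hmem : ∏ x : Σ i, Fin (a i), (X x.1 : MvPolynomial V k) ∈ edgeIdeal k G ^ t :=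
    prod_mem_pow_of_isMatching hedge hM hMcard
  simpa [Fintype.prod_sigma, monomial_eq, Finsupp.prod_fintype] using hmem

theorem gradedPiece_edgeIdeal_pow_eq [Finite V] (hG : HasBipartiteNonNeighbors G) {m : ℕ}
    (hm : 2 * t ≤ m) : gradedPiece (edgeIdeal k G ^ t) m = gradedPiece (symbPow k G t) m := by
  refine (gradedPiece_mono (edgeIdeal_pow_le_symbPow G t) m).antisymm ?_
  rintro p ⟨hp, hpm⟩
  refine ⟨?_, hpm⟩
  rw [p.as_sum]
  refine Ideal.sum_mem _ fun u hu => ?_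
  have hdeg : u.degree = m := by
    rw [Finsupp.degree_eq_weight_one]
    exact hpm (mem_support_iff.1 hu)
  rw [← mul_one (coeff u p), ← C_mul_monomial]
  exact Ideal.mul_mem_left _ _ <|
    monomial_mem_edgeIdeal_pow hG (hdeg ▸ hm) fun _ hC => le_sum_of_mem_symbPow hp hu hC

theorem le_of_mem_symbPow_of_le_single_add_single [Finite V] {p : MvPolynomial V k}
    (hp : p ∈ symbPow k G t) {u : V →₀ ℕ} (hu : u ∈ p.support) {i j : V} {d : ℕ}
    (hle : u ≤ Finsupp.single i d + Finsupp.single j d) : t ≤ u i := by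
  classical
  have := Fintype.ofFinite V
  have hcover : IsVertexCover G (Finset.univ.erase j) := fun a b hab => by
    simp only [Finset.mem_erase, Finset.mem_univ, and_true]
    exact not_and_or.1 fun h => hab.ne (h.1.trans h.2.symm)
  have hzero {l : V} (hli : l ≠ i) (hlj : l ≠ j) : u l = 0 := by
    simpa [Finsupp.single_apply, hli.symm, hlj.symm] using hle l
  calc
    t ≤ ∑ l ∈ Finset.univ.erase j, u l := le_sum_of_mem_symbPow hp hu hcover
    _ ≤ ∑ l ∈ {i}, u l := Finset.sum_le_sum_of_ne_zero fun l hl hul => by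
      have hlj := Finset.ne_of_mem_erase hl
      exact Finset.mem_singleton.2 (by_contra fun hli => hul (hzero hli hlj))
    _ = u i := Finset.sum_singleton _ _

theorem two_mul_le_of_isGeneratedInDegreeLE [Finite V] {J : Ideal (MvPolynomial V k)} {i j : V}
    (hij : G.Adj i j) (hle : edgeIdeal k G ^ t ≤ J) (hle' : J ≤ symbPow k G t) {m : ℕ}
    (hJ : IsGeneratedInDegreeLE J m) : 2 * t ≤ m := by
  have := Fintype.ofFinite V
  by_contra! hlt
  -- No element of `J` of degree less than `2 * t` involves a divisor of `(X i * X j) ^ t`.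
  set e : V →₀ ℕ := Finsupp.single i t + Finsupp.single j t
  have hupper : IsUpperSet {u : V →₀ ℕ | ¬ u ≤ e} := fun u v huv hu hv => hu (huv.trans hv)
  have hJe : J ≤ restrictSupportIdeal k {u : V →₀ ℕ | ¬ u ≤ e} hupper := by
    rw [← hJ, Ideal.span_le]
    rintro p ⟨hp, hpm⟩ u hu (hue : u ≤ e)
    have hi : t ≤ u i := le_of_mem_symbPow_of_le_single_add_single (hle' hp) hu hue
    have hj : t ≤ u j :=
      le_of_mem_symbPow_of_le_single_add_single (hle' hp) hu (hue.trans_eq (add_comm _ _))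
    have hdeg : u i + u j ≤ u.degree := by
      classical
      rw [Finsupp.degree_eq_sum, ← Finset.sum_pair hij.ne]
      exact Finset.sum_le_sum_of_subset (Finset.subset_univ _)
    have hdeg_le : u.degree ≤ m := (le_totalDegree hu).trans hpm
    omega
  have hpow : monomial e (1 : k) = (X i * X j) ^ t := by
    rw [mul_pow, X_pow_eq_monomial, X_pow_eq_monomial, monomial_mul, mul_one]
  have hmem : monomial e (1 : k) ∈ J :=
    hle (hpow ▸ Ideal.pow_mem_pow (X_mul_X_mem_edgeIdeal hij) t)
  have hesupp : e ∈ (monomial e (1 : k)).support := by classical simp [support_monomial]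
  exact hJe hmem hesupp le_rfl

theorem stmt17_general [Finite V] (hG : HasBipartiteNonNeighbors G) (t : ℕ) :
    reg (symbPow k G t) = reg (edgeIdeal k G ^ t) := by
  rcases eq_or_ne G ⊥ with rfl | hne
  · rw [symbPow_bot]
  obtain ⟨i, j, hij⟩ := SimpleGraph.ne_bot_iff_exists_adj.1 hne
  have hle : edgeIdeal k G ^ t ≤ symbPow k G t := edgeIdeal_pow_le_symbPow G t
  exact (reg_congr hle (isHomogeneous_pow (isHomogeneous_edgeIdeal G) t)
    (isHomogeneous_symbPow G t) (isGeneratedInDegreeLE_edgeIdeal_pow G t)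
    (fun d hd => gradedPiece_edgeIdeal_pow_eq hG hd)
    (fun m hm => two_mul_le_of_isGeneratedInDegreeLE hij le_rfl hle hm)
    (fun m hm => two_mul_le_of_isGeneratedInDegreeLE hij hle le_rfl hm)).symm

end EdgeIdeal

-- A vertex not adjacent to `v` lies within cyclic distance `r` of `v`, on one of the two arcs of
-- length `r` starting at `v`, and two vertices on the same arc are again within distance `r`.
theorem hasBipartiteNonNeighbors_Gnr (n r : ℕ) [NeZero n] :
    HasBipartiteNonNeighbors (Gnr n r) := fun v => by
  let onArc (w : ZMod n) : Bool :=
    decide ((v.val ≤ w.val ∧ w.val ≤ v.val + r) ∨ w.val + n ≤ v.val + r)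
  have hvalid {w w' : ZMod n} (hw : ¬ (Gnr n r).Adj v w) (hw' : ¬ (Gnr n r).Adj v w')
      (hadj : (Gnr n r).Adj w w') : onArc w ≠ onArc w' := fun harc => by
    have hv_lt := v.val_lt
    have hw_lt := w.val_lt
    have hw_lt' := w'.val_lt
    have hvw : v = w ↔ v.val = w.val := (ZMod.val_injective n).eq_iff.symm
    have hvw' : v = w' ↔ v.val = w'.val := (ZMod.val_injective n).eq_iff.symm
    simp only [Gnr, SimpleGraph.fromRel_adj, ne_eq, hvw, hvw'] at hw hw' hadj
    rw [decide_eq_decide] at harc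
    replace hadj := hadj.2
    generalize v.val = a at *
    generalize w.val = b at *
    generalize w'.val = c at *
    omega
  let coloring : ((Gnr n r).induce {w | ¬ (Gnr n r).Adj v w}).Coloring Bool :=
    .mk (fun w => onArc w) fun {w w'} => hvalid w.2 w'.2
  exact coloring.colorable

/-- For the edge ideal `I = I(G_{n,r})`, the Castelnuovo–Mumford regularity
of the `t`-th symbolic power equals that of the `t`-th ordinary power, for all `t ≥ 1`. -/
theorem stmt17 {k : Type*} [Field k] (n r : ℕ) (hn : 2 ≤ n) (hr : r ≤ n / 2 - 1)
    (t : ℕ) (ht : 1 ≤ t) :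
    reg (symbPow k (Gnr n r) t) = reg ((edgeIdeal k (Gnr n r)) ^ t) := by
  have : NeZero n := ⟨by omega⟩
  exact stmt17_general (hasBipartiteNonNeighbors_Gnr n r) t
end
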